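/- arXiv:2112.08685 — 2 statements merged into one kernel-verified Lean document; each statement's English description precedes it below -/
import Mathlib

section
/- Let n ≥ t+3 with t ≥ 1, and let 𝒢 ⊆ 2^[n] be a shifted 3-wise t-intersecting family. If [t+3]∖{t} ∈ 𝒢, then 𝒢 ⊆ F_1^t, i.e., every G ∈ 𝒢 satisfies |G ∩ [t+3]| ≥ t+2. -/
/-!
Shifting `[t+3] ∖ {t}` puts `[t+3] ∖ {a}` into `𝒢` for every `a ∈ {t, …, t+3}`
(`erase_mem_of_shifted`). Let `G ∈ 𝒢` and `S = G ∩ {t, …, t+3}`. If `S ⊆ {a}`, then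
`G ∩ ([t+3] ∖ {a}) ⊆ [t-1]` has fewer than `t` elements, contradicting the intersection
property. Hence `S` contains distinct `a`, `b`, and intersecting `G` with `[t+3] ∖ {a}` and
`[t+3] ∖ {b}` removes exactly two elements of `G ∩ [t+3]` and leaves at least `t`.
-/

open Finset

/-- The `p`-measure of a family of subsets of `[n] = {1,…,n}`. -/
noncomputable def mu (p : ℝ) (n : ℕ) (𝒢 : Finset (Finset ℕ)) : ℝ :=
  ∑ G ∈ 𝒢, p ^ G.card * (1 - p) ^ (n - G.card)

/-- `𝒢` is a family of subsets of `[n] = {1,…,n}`. -/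
def FamilyOn (n : ℕ) (𝒢 : Finset (Finset ℕ)) : Prop :=
  ∀ G ∈ 𝒢, G ⊆ Finset.Icc 1 n

/-- `𝒢` is 3-wise `t`-intersecting. -/
def Intersecting3 (t : ℕ) (𝒢 : Finset (Finset ℕ)) : Prop :=
  ∀ G₁ ∈ 𝒢, ∀ G₂ ∈ 𝒢, ∀ G₃ ∈ 𝒢, t ≤ (G₁ ∩ G₂ ∩ G₃).card

/-- `𝒢` is shifted (stable under all shifting operations `σ_{i,j}`). -/
def Shifted (n : ℕ) (𝒢 : Finset (Finset ℕ)) : Prop :=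
  ∀ i j : ℕ, 1 ≤ i → i < j → j ≤ n → ∀ G ∈ 𝒢, j ∈ G → i ∉ G →
    insert i (G.erase j) ∈ 𝒢

/-- `𝒢` is inclusion maximal as a family of subsets of `[n]`. -/
def InclMaximal (n : ℕ) (𝒢 : Finset (Finset ℕ)) : Prop :=
  ∀ G ∈ 𝒢, ∀ H : Finset ℕ, G ⊆ H → H ⊆ Finset.Icc 1 n → H ∈ 𝒢

/-- The family `F_s^t = {F ⊆ [n] : |F ∩ [t+3s]| ≥ t+2s}`. -/
def Fst (n t s : ℕ) : Finset (Finset ℕ) :=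
  (Finset.Icc 1 n).powerset.filter
    (fun F => t + 2 * s ≤ (F ∩ Finset.Icc 1 (t + 3 * s)).card)

/-- The threshold `p₀(t) = 2/(√(4t+9) − 1)`. -/
noncomputable def p0 (t : ℕ) : ℝ := 2 / (Real.sqrt (4 * t + 9) - 1)

/-- `α(p) = (√((1+3p)/(1−p)) − 1)/2`. -/
noncomputable def alpha (p : ℝ) : ℝ := (Real.sqrt ((1 + 3 * p) / (1 - p)) - 1) / 2

/-- Two families of subsets of `[n]` are isomorphic: one is the image of the
other under a permutation of `[n]`. -/
def Isom (n : ℕ) (𝒢 𝒢' : Finset (Finset ℕ)) : Prop :=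
  ∃ π : Equiv.Perm ℕ, (∀ x ∈ Finset.Icc 1 n, π x ∈ Finset.Icc 1 n) ∧
    𝒢' = 𝒢.image (fun G => G.image π)

/-- The walk of `G ⊆ [n]` hits the line `y = 2x + c`
(at some step `j ≤ n`, where hitting at step `j` means `3|G∩[j]| = 2j + c`). -/
def HitsLine (n c : ℕ) (G : Finset ℕ) : Prop :=
  ∃ j : ℕ, j ≤ n ∧ 3 * (G ∩ Finset.Icc 1 j).card = 2 * j + c

theorem erase_mem_of_shifted {t n : ℕ} (ht : 1 ≤ t) (hn : t + 3 ≤ n)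
    {𝒢 : Finset (Finset ℕ)} (hsh : Shifted n 𝒢)
    (hmem : (Finset.Icc 1 (t + 3)).erase t ∈ 𝒢) {a : ℕ} (ha : a ∈ Finset.Icc t (t + 3)) :
    (Finset.Icc 1 (t + 3)).erase a ∈ 𝒢 := by
  rw [Finset.mem_Icc] at ha
  rcases ha.1.eq_or_lt with rfl | hlt
  · exact hmem
  · have h := hsh t a ht hlt (by omega) _ hmem
      (by simp only [Finset.mem_erase, Finset.mem_Icc]; omega) (by simp)
    convert h using 1
    ext x
    simp only [Finset.mem_insert, Finset.mem_erase, Finset.mem_Icc]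
    omega

/-- If `𝒢` is a shifted 3-wise `t`-intersecting family with
`[t+3] ∖ {t} ∈ 𝒢`, then `𝒢 ⊆ F_1^t`, i.e. `|G ∩ [t+3]| ≥ t+2` for all
`G ∈ 𝒢`. -/
theorem subset_F1 (t n : ℕ) (ht : 1 ≤ t) (hn : t + 3 ≤ n)
    (𝒢 : Finset (Finset ℕ)) (hfam : FamilyOn n 𝒢)
    (hsh : Shifted n 𝒢) (hint : Intersecting3 t 𝒢)
    (hmem : (Finset.Icc 1 (t + 3)).erase t ∈ 𝒢) :
    ∀ G ∈ 𝒢, t + 2 ≤ (G ∩ Finset.Icc 1 (t + 3)).card := by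
  intro G hG
  have key : ∀ a ∈ Finset.Icc t (t + 3), (Finset.Icc 1 (t + 3)).erase a ∈ 𝒢 :=
    fun a ha => erase_mem_of_shifted ht hn hsh hmem ha
  have hnot : ∀ a ∈ Finset.Icc t (t + 3), ¬ G ∩ Finset.Icc t (t + 3) ⊆ {a} := by
    intro a ha hS
    have h := hint G hG _ (key a ha) _ (key a ha)
    have hsub : G ∩ (Finset.Icc 1 (t + 3)).erase a ∩ (Finset.Icc 1 (t + 3)).erase a
        ⊆ Finset.Icc 1 (t - 1) := by
      intro x hx
      have hx' := @hS x
      simp only [Finset.mem_inter, Finset.mem_erase, Finset.mem_Icc,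
        Finset.mem_singleton] at hx hx' ⊢
      by_contra hcon
      exact hx.2.1 (hx' ⟨hx.1.1, by omega, by omega⟩)
    have hc := Finset.card_le_card hsub
    rw [Nat.card_Icc] at hc
    omega
  obtain ⟨a, ha, -⟩ := Finset.not_subset.1 (hnot t (by simp))
  rw [Finset.mem_inter] at ha
  obtain ⟨b, hb, hba⟩ := Finset.not_subset.1 (hnot a ha.2)
  rw [Finset.mem_inter] at hb
  rw [Finset.mem_singleton] at hba
  have h := hint G hG _ (key a ha.2) _ (key b hb.2)
  have heq : G ∩ (Finset.Icc 1 (t + 3)).erase a ∩ (Finset.Icc 1 (t + 3)).erase b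
      = ((G ∩ Finset.Icc 1 (t + 3)).erase a).erase b := by
    ext x
    simp only [Finset.mem_inter, Finset.mem_erase]
    tauto
  obtain ⟨haG, haI⟩ := ha
  obtain ⟨hbG, hbI⟩ := hb
  rw [Finset.mem_Icc] at haI hbI
  have ha' : a ∈ G ∩ Finset.Icc 1 (t + 3) :=
    Finset.mem_inter.2 ⟨haG, Finset.mem_Icc.2 (by omega)⟩
  have hb' : b ∈ (G ∩ Finset.Icc 1 (t + 3)).erase a :=
    Finset.mem_erase.2 ⟨hba, Finset.mem_inter.2 ⟨hbG, Finset.mem_Icc.2 (by omega)⟩⟩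
  rw [heq] at h
  have h1 := Finset.card_erase_add_one ha'
  have h2 := Finset.card_erase_add_one hb'
  omega
end

section
/- Let t ≥ 15, let s ≥ 3 be an integer with t+3s ≤ n, and let 0 < p ≤ p_0(t). Let 𝒢 ⊆ 2^[n] be a family such that every member either belongs to F_s^t or hits the line y = 2x + t + 1. Then μ_p(𝒢) ≤ α^{t+1} + (1/6)(t+1)(t+8)(t+9)·p^{t+6}q^3 < p^t, where α = (√((1+3p)/(1−p)) − 1)/2 and q = 1−p. -/
/-!
Write `q = 1 - p` and view `G ⊆ [n]` as a random walk whose distance to the line `y = 2x + t + 1`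
drops by `1` with probability `p` and grows by `2` with probability `q`.

*Measure bound.* As `α = p + q α³`, the potential `α ^ distance` is harmonic, so the walks hitting
the line have total measure at most `α ^ (t + 1)` (`stopped_sum`, `hit_prob_le`). The walk cannot jump
over the line, so a member of `F_s^t` that misses it passes exactly through `(s, t + 2s)`, one step
below the line. Another up-step would give a first hit at step `t + 3s + 1`, whose probability is
`(t + 1) / (t + 3s + 1) * C(t + 3s + 1, s) * p ^ (t + 2s + 1) * q ^ s` by the ballot-type formula
`firstHit_formula`. For `s ≥ 3` this is non-increasing in `s` (`firstHit_le`), and at `s = 3` it equals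
`p` times the second term of the claimed bound.

*Numerical inequality.* The condition `p ≤ p₀(t)` says `(t + 2) p² ≤ 1 + p`. Eliminating `t` through it
reduces `α (α / p) ^ t + (1/6)(t+1)(t+8)(t+9) p⁶ q³ < 1` to an inequality in the single variable
`0 < p ≤ 0.27373`. The left-hand side reaches about `0.997` at the right end point, so the estimates
`α ≤ p exp (p² (1 - 0.5385 p))` (`alpha_le_trunc`), `first_term_le` and `second_term_le` are chosen to be
nearly sharp there. The polynomial inequalities are certified by positive Bernstein coefficients.
-/

open Finset

/-! ### The numerical inequality -/

/-- The constant `0.27373` is just above `p₀(15) = 2 / (√69 - 1)`. -/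
lemma p_le_of {p : ℝ} {t : ℕ} (ht : 15 ≤ t) (h : (t + 2) * p ^ 2 ≤ 1 + p) : p ≤ 0.27373 := by
  have : (15:ℝ) ≤ t := by exact_mod_cast ht
  by_contra! hc
  nlinarith [sq_nonneg p]

/-- `1 / p₀(t)` is the positive root of `x² + x = t + 2`, so `p ≤ p₀(t)` means `(t + 2) p² ≤ 1 + p`. -/
lemma sq_le_of_le_p0 {p : ℝ} {t : ℕ} (hp : 0 < p) (hpp : p ≤ p0 t) :
    (t + 2) * p ^ 2 ≤ 1 + p := by
  unfold p0 at hpp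
  have ht : (0 : ℝ) ≤ t := Nat.cast_nonneg t
  set r := Real.sqrt (4 * t + 9) with hr
  have hr2 : r ^ 2 = 4 * t + 9 := Real.sq_sqrt (by positivity)
  have hr3 : 3 ≤ r := Real.le_sqrt_of_sq_le (by linarith)
  rw [le_div_iff₀ (by linarith)] at hpp
  have h1 : p * r ≤ 2 + p := by linarith
  have h2 : (p * r) ^ 2 ≤ (2 + p) ^ 2 := by
    apply pow_le_pow_left₀ (by positivity) h1
  rw [mul_pow, hr2] at h2
  nlinarith

/-- `α` is the positive root of `(1 - p)(α² + α) = p`. -/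
lemma alpha_spec {p : ℝ} (hp : 0 < p) (hp1 : p < 1) :
    0 < alpha p ∧ (1 - p) * (alpha p * (1 + alpha p)) = p := by
  have hq : 0 < 1 - p := by linarith
  unfold alpha
  set r := Real.sqrt ((1 + 3 * p) / (1 - p)) with hr
  have hr2 : r ^ 2 = (1 + 3 * p) / (1 - p) := Real.sq_sqrt (by positivity)
  have hr3 : 1 < r := by
    rw [hr, Real.lt_sqrt (by norm_num), lt_div_iff₀ hq]
    linarith
  refine ⟨by linarith, ?_⟩
  rw [eq_div_iff hq.ne'] at hr2
  nlinarith

lemma alpha_le {p a : ℝ} (hp : 0 < p) (hp1 : p < 1) (ha : 0 ≤ a)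
    (h : p ≤ (1 - p) * (a * (1 + a))) : alpha p ≤ a := by
  obtain ⟨h0, h1⟩ := alpha_spec hp hp1
  by_contra! hc
  have h2 : a * (1 + a) < alpha p * (1 + alpha p) := by nlinarith
  nlinarith [mul_lt_mul_of_pos_left h2 (sub_pos.2 hp1)]

/-- With `g = p² (1 - 0.5385 p)`, this bounds `α / p` by the second Taylor polynomial of `exp g`.
The slope `0.5385` makes `g` a chord-like upper approximation of `log (α / p)` that is nearly exact at
`p = 0.27373`, the only place where the final inequality is tight. -/
lemma alpha_le_trunc {p g : ℝ} (hp : 0 < p) (hp1 : p ≤ 0.27373) (hg : g = p ^ 2 * (1 - 0.5385 * p)) :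
    alpha p ≤ p * (1 + g + g ^ 2 / 2) := by
  have hg0 : 0 ≤ g := by
    rw [hg]; exact mul_nonneg (by positivity) (by linarith)
  apply alpha_le hp (by linarith) (by positivity)
  have key : 1 ≤ (1 - p) * ((1 + g + g ^ 2 / 2) * (1 + p * (1 + g + g ^ 2 / 2))) := by
    set w := 1 - 0.5385 * p with hw
    have hx : 0 ≤ 0.27373 - p := by linarith
    -- Divided by `p`, this polynomial has positive Bernstein coefficients on `[0, 0.27373]`.
    have hH : 0 ≤ w * (1 + g / 2) * (1 + p - 2 * p ^ 2) - 1
        + p ^ 3 * (1 - p) * w ^ 2 * (1 + g) := by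
      have hb (i j : ℕ) : 0 ≤ p ^ (i + 1) * (0.27373 - p) ^ j := by positivity
      rw [hg, hw]
      linarith [hb 0 8, hb 1 7, hb 2 6, hb 3 5, hb 4 4, hb 5 3, hb 6 2, hb 7 1, hb 8 0]
    have h2 : (1 - p) * ((1 + g + g ^ 2 / 2) * (1 + p * (1 + g + g ^ 2 / 2))) - 1 =
        p ^ 2 * (w * (1 + g / 2) * (1 + p - 2 * p ^ 2) - 1 + p ^ 3 * (1 - p) * w ^ 2 * (1 + g))
        + p * (1 - p) * g ^ 4 / 4 := by
      rw [hg]; ring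
    have h3 : 0 ≤ p * (1 - p) * g ^ 4 / 4 := by
      have : 0 ≤ 1 - p := by linarith
      positivity
    nlinarith [mul_nonneg (sq_nonneg p) hH]
  nlinarith

/-- Multiplying each of `t + 1`, `t + 8`, `t + 9` by `p²(1 - p)` and using `(t + 2) p² ≤ 1 + p`
removes `t`; the resulting polynomial in `p` is largest at the right end point. -/
lemma second_term_le {p : ℝ} {t : ℕ} (hp : 0 < p) (hp1 : p ≤ 0.27373)
    (h : (t + 2) * p ^ 2 ≤ 1 + p) :
    (1 / 6 : ℝ) * (t + 1) * (t + 8) * (t + 9) * p ^ 6 * (1 - p) ^ 3 ≤ 0.2373 := by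
  have hq : 0 < 1 - p := by linarith
  have h1 : (t + 1) * p ^ 2 * (1 - p) ≤ 1 - 2 * p ^ 2 + p ^ 3 := by nlinarith
  have h8 : (t + 8) * p ^ 2 * (1 - p) ≤ 1 + 5 * p ^ 2 - 6 * p ^ 3 := by nlinarith
  have h9 : (t + 9) * p ^ 2 * (1 - p) ≤ 1 + 6 * p ^ 2 - 7 * p ^ 3 := by nlinarith
  have ht : (0 : ℝ) ≤ t := Nat.cast_nonneg t
  have h18 : (t + 1) * p ^ 2 * (1 - p) * ((t + 8) * p ^ 2 * (1 - p)) ≤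
      (1 - 2 * p ^ 2 + p ^ 3) * (1 + 5 * p ^ 2 - 6 * p ^ 3) :=
    mul_le_mul h1 h8 (by positivity) (le_trans (by positivity) h1)
  -- Here, too, the difference of the two sides has positive Bernstein coefficients.
  have e18 : (1 - 2 * p ^ 2 + p ^ 3) * (1 + 5 * p ^ 2 - 6 * p ^ 3) ≤ 1.0899 := by
    have hb (i j : ℕ) : 0 ≤ p ^ i * (0.27373 - p) ^ j :=
      mul_nonneg (pow_nonneg hp.le i) (pow_nonneg (by linarith) j)
    linarith [hb 0 6, hb 1 5, hb 2 4, hb 3 3, hb 4 2, hb 5 1, hb 6 0]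
  have e9 : 1 + 6 * p ^ 2 - 7 * p ^ 3 ≤ 1.3060 := by
    nlinarith [mul_nonneg hp.le (sub_nonneg.2 hp1), mul_nonneg (mul_nonneg hp.le hp.le) (sub_nonneg.2 hp1)]
  have := mul_le_mul (h18.trans e18) (h9.trans e9) (by positivity) (by norm_num)
  calc _ = 1 / 6 * ((t + 1) * p ^ 2 * (1 - p) * ((t + 8) * p ^ 2 * (1 - p)) * ((t + 9) * p ^ 2 * (1 - p))) := by ring
    _ ≤ _ := by linarith

/-- Since `α ≤ p exp g` and `t p² ≤ 1 + p - 2p²`, the quotient `α ^ (t + 1) / p ^ t` is at most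
`α exp (t g)`, and the exponent `t g` is bounded by the polynomial `1 + d` in `p`. -/
lemma first_term_le {p : ℝ} {t : ℕ} (hp : 0 < p) (hp1 : p ≤ 0.27373)
    (h : (t + 2) * p ^ 2 ≤ 1 + p) : alpha p ^ (t + 1) ≤ 0.7625 * p ^ t := by
  set w := 1 - 0.5385 * p with hw
  have hw0 : 0 < w := by linarith
  set g := p ^ 2 * w with hg
  have hg0 : 0 ≤ g := by positivity
  have ha := alpha_le_trunc hp hp1 hg
  have ha0 := (alpha_spec hp (by linarith)).1
  have hexp : alpha p ≤ p * Real.exp g :=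
    ha.trans (mul_le_mul_of_nonneg_left (Real.quadratic_le_exp_of_nonneg hg0) hp.le)
  have hg1 : g ≤ 0.0639 := by
    have hb (i j : ℕ) : 0 ≤ p ^ i * (0.27373 - p) ^ j :=
      mul_nonneg (pow_nonneg hp.le i) (pow_nonneg (by linarith) j)
    rw [hg, hw]
    linarith [hb 0 3, hb 1 2, hb 2 1, hb 3 0]
  have ha1 : alpha p ≤ 1.06595 * p := by
    have : g ^ 2 ≤ 0.0639 ^ 2 := pow_le_pow_left₀ hg0 hg1 2
    nlinarith
  set d := (1 + p - 2 * p ^ 2) * w - 1 with hd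
  have htg : t * g ≤ 1 + d := by
    have : t * p ^ 2 ≤ 1 + p - 2 * p ^ 2 := by linarith
    calc t * g = (t * p ^ 2) * w := by rw [hg]; ring
      _ ≤ (1 + p - 2 * p ^ 2) * w := mul_le_mul_of_nonneg_right this hw0.le
      _ = 1 + d := by rw [hd]; ring
  have hd1 : |d| ≤ 1 := by
    rw [abs_le, hd, hw]; constructor <;> nlinarith
  have hed : Real.exp d ≤ 1 + d + d ^ 2 := by
    have := (abs_le.1 (Real.abs_exp_sub_one_sub_id_le hd1)).2
    linarith
  -- Nearly the tangent line at the right end point `0.27373`; the proof is by Bernstein coefficients.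
  have hlin : 1 + d + d ^ 2 ≤ 0.96 + 0.63 * (0.27373 - p) := by
    have hb (i j : ℕ) : 0 ≤ p ^ i * (0.27373 - p) ^ j :=
      mul_nonneg (pow_nonneg hp.le i) (pow_nonneg (by linarith) j)
    rw [hd, hw]
    linarith [hb 0 6, hb 1 5, hb 2 4, hb 3 3, hb 4 2, hb 5 1, hb 6 0]
  have hlin0 := (Real.exp_pos d).le.trans (hed.trans hlin)
  have he : Real.exp (t * g) ≤ 2.7182818286 * (0.96 + 0.63 * (0.27373 - p)) := by
    calc Real.exp (t * g) ≤ Real.exp (1 + d) := Real.exp_le_exp.2 htg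
      _ = Real.exp 1 * Real.exp d := Real.exp_add _ _
      _ ≤ _ := mul_le_mul Real.exp_one_lt_d9.le (hed.trans hlin) (Real.exp_pos _).le (by norm_num)
  have hfin : alpha p * Real.exp (t * g) ≤ 0.7625 := by
    calc _ ≤ 1.06595 * p * (2.7182818286 * (0.96 + 0.63 * (0.27373 - p))) :=
          mul_le_mul ha1 he (Real.exp_pos _).le (by positivity)
      _ ≤ _ := by nlinarith
  calc alpha p ^ (t + 1) = alpha p ^ t * alpha p := pow_succ _ _
    _ ≤ (p * Real.exp g) ^ t * alpha p :=
      mul_le_mul_of_nonneg_right (pow_le_pow_left₀ ha0.le hexp t) ha0.le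
    _ = (alpha p * Real.exp (t * g)) * p ^ t := by rw [mul_pow, ← Real.exp_nat_mul]; ring
    _ ≤ _ := mul_le_mul_of_nonneg_right hfin (by positivity)

lemma numeric {p : ℝ} {t : ℕ} (ht : 15 ≤ t) (hp : 0 < p) (h : (t + 2) * p ^ 2 ≤ 1 + p) :
    alpha p ^ (t + 1) +
        (1 / 6 : ℝ) * (t + 1) * (t + 8) * (t + 9) * p ^ (t + 6) * (1 - p) ^ 3 < p ^ t := by
  have hp1 := p_le_of ht h
  have h1 := first_term_le hp hp1 h
  have h2 := mul_le_mul_of_nonneg_right (second_term_le hp hp1 h) (pow_pos hp t).le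
  have h3 := pow_pos hp t
  calc _ = alpha p ^ (t + 1) + (1 / 6 : ℝ) * (t + 1) * (t + 8) * (t + 9) * p ^ 6 * (1 - p) ^ 3 * p ^ t := by ring
    _ < _ := by linarith

/-! ### Expectations and stopping for the random walk -/

/-- Conditioning on the last step: the expectation over subsets of `[n + 1]` in terms of `[n]`. -/
lemma sum_powerset_succ (p : ℝ) (n : ℕ) (f : Finset ℕ → ℝ) :
    ∑ G ∈ (Icc 1 (n + 1)).powerset, p ^ G.card * (1 - p) ^ (n + 1 - G.card) * f G =
      ∑ G ∈ (Icc 1 n).powerset, p ^ G.card * (1 - p) ^ (n - G.card) *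
        ((1 - p) * f G + p * f (insert (n + 1) G)) := by
  have hI : Icc 1 (n + 1) = insert (n + 1) (Icc 1 n) := by
    ext x; simp only [mem_Icc, mem_insert]; omega
  rw [hI, Finset.sum_powerset_insert (by simp), ← Finset.sum_add_distrib]
  refine Finset.sum_congr rfl fun G hG => ?_
  rw [mem_powerset] at hG
  have hc : G.card ≤ n := by simpa using Finset.card_le_card hG
  have hn : n + 1 ∉ G := fun h => by have := hG h; simp at this
  rw [Finset.card_insert_of_notMem hn, Nat.add_sub_add_right, Nat.succ_sub hc, pow_succ]
  ring

/-- The expectation of a function of `G ∩ [M]` does not depend on the ambient `n ≥ M`. -/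
lemma sum_powerset_marginal (p : ℝ) {M n : ℕ} (hMn : M ≤ n) (f : Finset ℕ → ℝ)
    (hf : ∀ k G, M < k → f (insert k G) = f G) :
    ∑ G ∈ (Icc 1 n).powerset, p ^ G.card * (1 - p) ^ (n - G.card) * f G =
      ∑ G ∈ (Icc 1 M).powerset, p ^ G.card * (1 - p) ^ (M - G.card) * f G := by
  induction n, hMn using Nat.le_induction with
  | base => rfl
  | succ n hn ih =>
    rw [sum_powerset_succ, ← ih]
    refine Finset.sum_congr rfl fun G _ => ?_
    rw [hf (n + 1) G (by omega)]
    ring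

/-- The quantity `3|G ∩ [j]| - 2j` increases by at most `1` per step, so a walk starting below the
line `y = 2x + c` cannot cross it without hitting it. -/
lemma lt_of_not_hitsLine {n c : ℕ} (hc : 0 < c) {G : Finset ℕ} (h : ¬ HitsLine n c G) :
    ∀ j ≤ n, 3 * (G ∩ Icc 1 j).card < 2 * j + c := by
  intro j
  induction j with
  | zero => simpa using hc
  | succ j ih =>
    intro hj
    have h1 := ih (by omega)
    have h2 : 3 * (G ∩ Icc 1 (j + 1)).card ≠ 2 * (j + 1) + c := fun h' => h ⟨j + 1, hj, h'⟩
    have h3 : (G ∩ Icc 1 (j + 1)).card ≤ (G ∩ Icc 1 j).card + 1 := by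
      have : G ∩ Icc 1 (j + 1) ⊆ insert (j + 1) (G ∩ Icc 1 j) := by
        intro x; simp only [mem_inter, mem_Icc, mem_insert]; grind
      exact (card_le_card this).trans (card_insert_le _ _)
    omega

lemma inter_insert_Icc {k j : ℕ} (h : j < k) (G : Finset ℕ) :
    insert k G ∩ Icc 1 j = G ∩ Icc 1 j :=
  Finset.insert_inter_of_notMem (by simp only [mem_Icc]; omega)

lemma hitsLine_insert {n c k : ℕ} (h : n < k) (G : Finset ℕ) :
    HitsLine n c (insert k G) ↔ HitsLine n c G := by
  unfold HitsLine
  refine exists_congr fun j => and_congr_right fun hj => ?_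
  rw [inter_insert_Icc (by omega)]

lemma hitsLine_succ {n c : ℕ} {G : Finset ℕ} :
    HitsLine (n + 1) c G ↔
      HitsLine n c G ∨ 3 * (G ∩ Icc 1 (n + 1)).card = 2 * (n + 1) + c := by
  constructor
  · rintro ⟨j, hj, h⟩
    rcases Nat.lt_or_ge n j with h' | h'
    · obtain rfl : j = n + 1 := by omega
      exact Or.inr h
    · exact Or.inl ⟨j, h', h⟩
  · rintro (⟨j, hj, h⟩ | h)
    · exact ⟨j, by omega, h⟩
    · exact ⟨n + 1, le_rfl, h⟩

open Classical in
/-- Optional stopping for the walk: at time `n` the distance to the line `y = 2x + c` is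
`2n + c - 3|G|`, which drops by `1` with probability `p` and grows by `2` with probability `1 - p`.
If `Φ n k` is harmonic for this walk up to time `N` and equals `z` at distance `0`, then the walk
stopped on the line has constant expected potential `Φ 0 c`. -/
lemma stopped_sum (p z : ℝ) {N c : ℕ} (hc : 0 < c) (Φ : ℕ → ℕ → ℝ)
    (h0 : ∀ n ≤ N, Φ n 0 = z)
    (hΦ : ∀ n < N, ∀ k, Φ n (k + 1) = p * Φ (n + 1) k + (1 - p) * Φ (n + 1) (k + 3)) :
    ∀ n ≤ N, ∑ G ∈ (Icc 1 n).powerset, p ^ G.card * (1 - p) ^ (n - G.card) *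
      (if HitsLine n c G then z else Φ n (2 * n + c - 3 * G.card)) = Φ 0 c := by
  intro n
  induction n with
  | zero =>
    intro _
    have : ¬ HitsLine 0 c ∅ := by
      rintro ⟨j, _, h⟩
      simp at h
      omega
    simp [this]
  | succ n ih =>
    intro hn
    rw [sum_powerset_succ, ← ih (by omega)]
    refine Finset.sum_congr rfl fun G hG => ?_
    rw [mem_powerset] at hG
    congr 1
    have hGi : G ∩ Icc 1 n = G := Finset.inter_eq_left.2 hG
    have hG1 : G ∩ Icc 1 (n + 1) = G :=
      Finset.inter_eq_left.2 (hG.trans (Finset.Icc_subset_Icc_right (by omega)))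
    have hnG : n + 1 ∉ G := fun h => by have := hG h; simp at this
    have hI : insert (n + 1) G ∩ Icc 1 (n + 1) = insert (n + 1) G := by
      rw [Finset.insert_inter_of_mem (by simp), hG1]
    rw [hitsLine_succ, hitsLine_succ, hitsLine_insert (Nat.lt_succ_self n), hI, hG1,
      Finset.card_insert_of_notMem hnG]
    by_cases hh : HitsLine n c G
    · simp only [hh, true_or, if_true]; ring
    · have hlt := lt_of_not_hitsLine hc hh n le_rfl
      rw [hGi] at hlt
      obtain ⟨k, hk⟩ : ∃ k, 2 * n + c = 3 * G.card + (k + 1) :=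
        ⟨2 * n + c - 3 * G.card - 1, by omega⟩
      have e0 : 2 * n + c - 3 * G.card = k + 1 := by omega
      have e1 : 2 * (n + 1) + c - 3 * G.card = k + 3 := by omega
      have e2 : 2 * (n + 1) + c - 3 * (G.card + 1) = k := by omega
      have hr : ¬ 3 * G.card = 2 * (n + 1) + c := by omega
      rw [e0, e1, e2, hΦ n (by omega) k]
      simp only [hh, hr, false_or, if_false]
      by_cases hu : 3 * (G.card + 1) = 2 * (n + 1) + c
      · have hk0 : k = 0 := by omega
        simp only [hu, if_true, hk0, h0 (n + 1) hn]
        ring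
      · simp only [hu, if_false]; ring

lemma alpha_cubic {p : ℝ} (hp : 0 < p) (hp1 : p < 1) :
    alpha p = p + (1 - p) * alpha p ^ 3 := by
  have h := (alpha_spec hp hp1).2
  linear_combination (alpha p - 1) * h * (-1)

open Classical in
/-- The probability of hitting `y = 2x + c` is at most `α ^ c`, by the harmonic potential `α ^ k`. -/
lemma hit_prob_le {p : ℝ} (hp : 0 < p) (hp1 : p < 1) (n c : ℕ) (hc : 0 < c) :
    ∑ G ∈ (Icc 1 n).powerset, p ^ G.card * (1 - p) ^ (n - G.card) *
      (if HitsLine n c G then (1 : ℝ) else 0) ≤ alpha p ^ c := by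
  have ha := (alpha_spec hp hp1).1
  have hq : 0 < 1 - p := by linarith
  rw [← stopped_sum p 1 (N := n) hc (fun _ k => alpha p ^ k) (fun _ _ => pow_zero _)
    (fun _ _ k => by linear_combination alpha p ^ k * alpha_cubic hp hp1) n le_rfl]
  refine Finset.sum_le_sum fun G _ => mul_le_mul_of_nonneg_left ?_ (by positivity)
  split_ifs
  · exact le_rfl
  · positivity

/-! ### First-hit probabilities -/

/-- The probability that the walk started at distance `k` from the line first hits it at exactly
step `m`, defined by conditioning on the first step. -/
noncomputable def firstHit (p : ℝ) : ℕ → ℕ → ℝ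
  | 0, 0 => 1
  | 0, _ + 1 => 0
  | _ + 1, 0 => 0
  | m + 1, k + 1 => p * firstHit p m k + (1 - p) * firstHit p m (k + 3)

lemma firstHit_eq_zero (p : ℝ) {m k : ℕ} (h : m < k) : firstHit p m k = 0 := by
  induction m generalizing k with
  | zero => obtain ⟨k, rfl⟩ := Nat.exists_eq_succ_of_ne_zero h.ne'; rfl
  | succ m ih =>
    obtain ⟨k, rfl⟩ := Nat.exists_eq_succ_of_ne_zero (Nat.ne_zero_of_lt h)
    rw [Nat.succ_eq_add_one, firstHit, ih (by omega), ih (by omega)]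
    ring

/-- The ballot-type (hitting time) formula: the first hit occurs at step `m = k + 3x` with probability
`(k / m) * C(m, x) * p ^ (k + 2x) * (1 - p) ^ x`. -/
lemma firstHit_formula (p : ℝ) (m : ℕ) : ∀ k x : ℕ, m = k + 3 * x →
    (m : ℝ) * firstHit p m k = k * (m.choose x) * p ^ (k + 2 * x) * (1 - p) ^ x := by
  induction m with
  | zero => intro k x h; obtain ⟨rfl, rfl⟩ : k = 0 ∧ x = 0 := by omega
            simp
  | succ m ih =>
    rintro (_ | k) x h
    · simp [firstHit]
    rw [firstHit]
    rcases x with _ | y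
    · obtain rfl : m = k := by omega
      rw [firstHit_eq_zero p (show m < m + 3 by omega)]
      have h1 := ih m 0 rfl
      rcases m with _ | m
      · simp [firstHit]
      · have hm : ((m + 1 : ℕ) : ℝ) ≠ 0 := by positivity
        have h2 : firstHit p (m + 1) (m + 1) = p ^ (m + 1) := by
          apply mul_left_cancel₀ hm
          simpa using h1
        rw [h2]
        simp only [Nat.choose_zero_right, mul_zero, add_zero, pow_zero]
        push_cast; ring
    · have h1 := ih k (y + 1) (by omega)
      have h2 := ih (k + 3) y (by omega)
      have hm : (m : ℝ) ≠ 0 := by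
        have : m ≠ 0 := by omega
        exact_mod_cast this
      have hmr : (m : ℝ) = k + 3 * y + 3 := by
        have : m = k + 3 * y + 3 := by omega
        exact_mod_cast this
      have hch : ((m.choose (y + 1) : ℕ) : ℝ) * (y + 1) = m.choose y * (k + 2 * y + 3) := by
        have := Nat.choose_succ_right_eq m y
        rw [show m - y = k + 2 * y + 3 by omega] at this
        exact_mod_cast this
      have hpas : (((m + 1).choose (y + 1) : ℕ) : ℝ) = m.choose y + m.choose (y + 1) := by
        rw [Nat.choose_succ_succ]; push_cast; rfl
      apply mul_left_cancel₀ hm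
      rw [hpas]
      push_cast at h1 h2 ⊢
      have e1 : p ^ (k + 1 + 2 * (y + 1)) = p ^ (k + 2 * (y + 1)) * p := by ring
      have e2 : p ^ (k + 3 + 2 * y) = p ^ (k + 2 * (y + 1)) * p := by ring
      rw [e2] at h2
      rw [e1]
      generalize p ^ (k + 2 * (y + 1)) = P at *
      rw [pow_succ] at *
      generalize (1 - p) ^ y = Q at *
      generalize ((m.choose y : ℕ) : ℝ) = C at *
      generalize ((m.choose (y + 1) : ℕ) : ℝ) = C' at *
      rw [hmr] at *
      linear_combination ((k : ℝ) + 3 * y + 3 + 1) * (p * h1 + (1 - p) * h2)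
        - 3 * P * p * Q * (1 - p) * hch

lemma choose_three_step (N s a : ℕ) (h : N = s + a) :
    ((N + 3).choose (s + 1) : ℝ) * ((s + 1) * (a + 1) * (a + 2)) =
      N.choose s * ((N + 1) * (N + 2) * (N + 3)) := by
  have h1 := Nat.add_one_mul_choose_eq N s
  have h2 := Nat.choose_mul_succ_eq (N + 1) (s + 1)
  have h3 := Nat.choose_mul_succ_eq (N + 2) (s + 1)
  rw [show N + 1 + 1 - (s + 1) = a + 1 by omega] at h2
  rw [show N + 2 + 1 - (s + 1) = a + 2 by omega] at h3
  have h1' : ((N : ℝ) + 1) * N.choose s = (N + 1).choose (s + 1) * (s + 1) := by exact_mod_cast h1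
  have h2' : ((N + 1).choose (s + 1) : ℝ) * (N + 2) = (N + 2).choose (s + 1) * (a + 1) := by
    exact_mod_cast h2
  have h3' : ((N + 2).choose (s + 1) : ℝ) * (N + 3) = (N + 3).choose (s + 1) * (a + 2) := by
    exact_mod_cast h3
  linear_combination (-((s:ℝ)+1)*(a+1)) * h3' - ((s:ℝ)+1)*(N+3) * h2' - ((N:ℝ)+2)*(N+3)*h1'

lemma ratio_poly {t s : ℕ} (ht : 15 ≤ t) (hs : 3 ≤ s) :
    (t + 1 + 3 * s) * (t + 2 + 3 * s) * (t + 3 + 3 * s) ≤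
      (t + 2) * ((s + 1) * (t + 2 + 2 * s) * (t + 3 + 2 * s)) := by
  obtain ⟨a, rfl⟩ := Nat.exists_eq_add_of_le ht
  obtain ⟨b, rfl⟩ := Nat.exists_eq_add_of_le hs
  ring_nf
  nlinarith [Nat.zero_le (a*b), Nat.zero_le (a*a), Nat.zero_le (a*b*b), Nat.zero_le (a*a*b), Nat.zero_le (a*a*a), Nat.zero_le (b*b*b)]

/-- The first-hit probabilities at steps `t + 1 + 3s` are non-increasing in `s ≥ 3`, because
`(t + 2) p² (1 - p) ≤ 1`; the value at `s = 3` is explicit. -/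
lemma firstHit_le {p : ℝ} {t s : ℕ} (hp : 0 < p) (hp1 : p < 1) (ht : 15 ≤ t)
    (h : (t + 2) * p ^ 2 ≤ 1 + p) (hs : 3 ≤ s) :
    firstHit p (t + 1 + 3 * s) (t + 1) ≤
      p * ((1 / 6 : ℝ) * (t + 1) * (t + 8) * (t + 9) * p ^ (t + 6) * (1 - p) ^ 3) := by
  have hq : 0 < 1 - p := by linarith
  induction s, hs using Nat.le_induction with
  | base =>
    have hf := firstHit_formula p (t + 1 + 3 * 3) (t + 1) 3 rfl
    have hch : (((t + 1 + 3 * 3).choose 3 : ℕ) : ℝ) * 6 = (t + 10) * (t + 9) * (t + 8) := by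
      have h2 := Nat.add_one_mul_choose_eq (t + 8) 1
      have h3 := Nat.add_one_mul_choose_eq (t + 9) 2
      have h1' : ((t : ℝ) + 8) * 1 = (t + 8).choose 1 := by simp
      have h2' : ((t : ℝ) + 9) * (t + 8).choose 1 = (t + 9).choose 2 * 2 := by exact_mod_cast h2
      have h3' : ((t : ℝ) + 10) * (t + 9).choose 2 = (t + 10).choose 3 * 3 := by exact_mod_cast h3
      rw [show t + 1 + 3 * 3 = t + 10 by ring]
      linear_combination (-2) * h3' - ((t:ℝ)+10) * h2' - ((t:ℝ)+10)*(t+9)*h1'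
    apply le_of_eq
    have hN : (t : ℝ) + 10 ≠ 0 := by positivity
    apply mul_left_cancel₀ hN
    push_cast at hf
    linear_combination hf + (1/6) * ((t:ℝ)+1) * p ^ (t + 7) * (1 - p) ^ 3 * hch
  | succ s hs ih =>
    refine le_trans ?_ ih
    have hf := firstHit_formula p (t + 1 + 3 * s) (t + 1) s rfl
    have hf' := firstHit_formula p (t + 1 + 3 * (s + 1)) (t + 1) (s + 1) rfl
    have hch := choose_three_step (t + 1 + 3 * s) s (t + 1 + 2 * s) (by ring)
    have hpoly : ((t : ℝ) + 1 + 3 * s) * (t + 2 + 3 * s) * (t + 3 + 3 * s) ≤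
      (t + 2) * ((s + 1) * (t + 2 + 2 * s) * (t + 3 + 2 * s)) := by
      exact_mod_cast ratio_poly ht hs
    have hpq : ((t : ℝ) + 2) * (p ^ 2 * (1 - p)) ≤ 1 := by nlinarith [sq_nonneg p]
    set x := firstHit p (t + 1 + 3 * s) (t + 1) with hx
    set y := firstHit p (t + 1 + 3 * (s + 1)) (t + 1) with hy
    have hx0 : 0 ≤ x := by
      have hN : (0 : ℝ) < ((t + 1 + 3 * s : ℕ) : ℝ) := by positivity
      refine nonneg_of_mul_nonneg_right (b := x) ?_ hN
      rw [hf]; positivity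
    rw [show t + 1 + 3 * s + 3 = t + 1 + 3 * (s + 1) by ring] at hch
    push_cast at hf hf' hch
    have hD : (0 : ℝ) < (s + 1) * (t + 2 + 2 * s) * (t + 3 + 2 * s) := by positivity
    have hrec : y * (((s : ℝ) + 1) * (t + 2 + 2 * s) * (t + 3 + 2 * s)) =
        x * (p ^ 2 * (1 - p)) * ((t + 1 + 3 * s) * (t + 2 + 3 * s) * (t + 3 + 3 * s)) := by
      have hN : (t : ℝ) + 1 + 3 * (s + 1) ≠ 0 := by positivity
      apply mul_left_cancel₀ hN
      linear_combination (((s : ℝ) + 1) * (t + 2 + 2 * s) * (t + 3 + 2 * s)) * hf'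
        - (p ^ 2 * (1 - p)) * ((t + 2 + 3 * s) * (t + 3 + 3 * s)) * ((t : ℝ) + 1 + 3 * (s + 1)) * hf
        + (t + 1) * p ^ (t + 1 + 2 * (s + 1)) * (1 - p) ^ (s + 1) * hch
    refine le_of_mul_le_mul_right ?_ hD
    rw [hrec]
    calc _ ≤ x * (p ^ 2 * (1 - p)) * ((t + 2) * ((s + 1) * (t + 2 + 2 * s) * (t + 3 + 2 * s))) :=
          mul_le_mul_of_nonneg_left hpoly (by positivity)
      _ = x * ((s + 1) * (t + 2 + 2 * s) * (t + 3 + 2 * s)) * ((t + 2) * (p ^ 2 * (1 - p))) := by ring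
      _ ≤ _ := mul_le_of_le_one_right (by positivity) hpq

open Classical in
/-- A walk that avoids the line up to step `t + 3s` and then stands one step below it first hits the
line at the next step with probability `p`. This bounds the measure of the walks in `F_s^t` that miss
the line. -/
lemma residual_le {p : ℝ} (hp : 0 < p) (hp1 : p < 1) {t s n : ℕ} (hn : t + 3 * s ≤ n) :
    p * ∑ G ∈ (Icc 1 n).powerset, p ^ G.card * (1 - p) ^ (n - G.card) *
      (if ¬ HitsLine (t + 3 * s) (t + 1) G ∧ (G ∩ Icc 1 (t + 3 * s)).card = t + 2 * s
        then (1 : ℝ) else 0) ≤ firstHit p (t + 1 + 3 * s) (t + 1) := by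
  have hq : 0 < 1 - p := by linarith
  have hnn : ∀ m k, 0 ≤ firstHit p m k := by
    intro m
    induction m with
    | zero => rintro (_ | k) <;> simp [firstHit]
    | succ m ih =>
      rintro (_ | k)
      · simp [firstHit]
      · rw [firstHit]
        have := ih k; have := ih (k + 3); positivity
  rw [sum_powerset_marginal p hn _ (fun k G hk => by
    rw [hitsLine_insert hk, inter_insert_Icc hk]), Finset.mul_sum]
  have key := stopped_sum p 0 (N := t + 3 * s) (c := t + 1) (by omega)
    (fun n k => firstHit p (t + 3 * s + 1 - n) k)
    (fun n hn => by
      simp only [Nat.succ_sub hn, firstHit])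
    (fun n hn k => by
      simp only [Nat.succ_sub hn.le, firstHit]
      rw [Nat.add_sub_add_right]) (t + 3 * s) le_rfl
  rw [Nat.sub_zero, show t + 3 * s + 1 = t + 1 + 3 * s by ring] at key
  rw [← key]
  refine Finset.sum_le_sum fun G hG => ?_
  rw [mem_powerset] at hG
  have hGi : G ∩ Icc 1 (t + 3 * s) = G := Finset.inter_eq_left.2 hG
  rw [mul_left_comm]
  refine mul_le_mul_of_nonneg_left ?_ (by positivity)
  rw [hGi]
  by_cases hh : HitsLine (t + 3 * s) (t + 1) G
  · simp [hh]
  · by_cases hcard : G.card = t + 2 * s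
    · simp only [hh, hcard, not_false_eq_true, and_self, if_true, if_false]
      rw [show t + 1 + 3 * s - (t + 3 * s) = 1 by omega,
        show 2 * (t + 3 * s) + (t + 1) - 3 * (t + 2 * s) = 1 by omega]
      simp [firstHit]
    · simp only [hh, hcard, and_false, if_false, mul_zero]
      exact hnn _ _

/-- Claim 8 (case `s ≥ 3`): for `t ≥ 15`, `s ≥ 3` with `t+3s ≤ n` and
`0 < p ≤ p₀(t)`: if every member of `𝒢 ⊆ 2^[n]` belongs to `F_s^t` or hits the
line `y = 2x + t + 1`, then
`μ_p(𝒢) ≤ α^{t+1} + (1/6)(t+1)(t+8)(t+9) p^{t+6} q³ < p^t`. -/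
theorem claim8 (t s n : ℕ) (ht : 15 ≤ t) (hs : 3 ≤ s) (hn : t + 3 * s ≤ n)
    (p : ℝ) (hp : 0 < p) (hpp : p ≤ p0 t)
    (𝒢 : Finset (Finset ℕ)) (hfam : FamilyOn n 𝒢)
    (hhit : ∀ G ∈ 𝒢, G ∈ Fst n t s ∨ HitsLine n (t + 1) G) :
    mu p n 𝒢 ≤ alpha p ^ (t + 1) +
        (1 / 6 : ℝ) * (t + 1) * (t + 8) * (t + 9) * p ^ (t + 6) * (1 - p) ^ 3 ∧
      alpha p ^ (t + 1) +
        (1 / 6 : ℝ) * (t + 1) * (t + 8) * (t + 9) * p ^ (t + 6) * (1 - p) ^ 3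
        < p ^ t := by
  classical
  have hsq := sq_le_of_le_p0 hp hpp
  have hp1 : p < 1 := (p_le_of ht hsq).trans_lt (by norm_num)
  have hq : 0 < 1 - p := by linarith
  refine ⟨?_, numeric ht hp hsq⟩
  have hres := le_of_mul_le_mul_left
    ((residual_le hp hp1 hn).trans (firstHit_le hp hp1 ht hsq hs)) hp
  refine le_trans ?_ (add_le_add (hit_prob_le hp hp1 n (t + 1) (by omega)) hres)
  rw [← Finset.sum_add_distrib]
  have hsub : 𝒢 ⊆ (Icc 1 n).powerset := fun G hG => mem_powerset.2 (hfam G hG)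
  refine le_trans (Finset.sum_le_sum fun G hG => ?_)
    (Finset.sum_le_sum_of_subset_of_nonneg hsub fun G _ _ => ?_)
  · rw [← mul_add]
    refine le_mul_of_one_le_right (by positivity) ?_
    by_cases hh : HitsLine n (t + 1) G
    · rw [if_pos hh]
      split_ifs <;> norm_num
    · have hM : ¬ HitsLine (t + 3 * s) (t + 1) G :=
        fun ⟨j, hj, h⟩ => hh ⟨j, hj.trans hn, h⟩
      have hF : t + 2 * s ≤ (G ∩ Icc 1 (t + 3 * s)).card :=
        (mem_filter.1 ((hhit G hG).resolve_right hh)).2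
      have hlt := lt_of_not_hitsLine (by omega) hM (t + 3 * s) le_rfl
      rw [if_neg hh, if_pos ⟨hM, by omega⟩, zero_add]
  · positivity
end
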